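/- Let F ⊆ {0,1}^n be defined by a constraint family ((V_j, Q_j))_{j∈J} in which every constraint relation Q_j is closed under the coordinatewise application of the ternary operation (x,y,z) ↦ x ∧ (y ∨ z) (each Q_j is IHSB−). Then for any two distinct connected components A and B of the solution graph G(F), there exists j ∈ J such that the images of A and B under restriction to V_j are disconnected in the solution graph of the projection π_j(F) = {a|_{V_j} : a ∈ F}: no element of {a|_{V_j} : a ∈ A} is connected to an element of {b|_{V_j} : b ∈ B} in G(π_j(F)). -/

import Mathlib

/-- Coordinatewise majority operation on `Bool`. -/
def maj (x y z : Bool) : Bool := (x && y) || (y && z) || (z && x)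

/-- One step in the solution graph of `R`: both endpoints are solutions and
they differ in exactly one coordinate. -/
def stepR {ι : Type*} [Fintype ι] [DecidableEq ι] (R : Set (ι → Bool))
    (a b : ι → Bool) : Prop :=
  a ∈ R ∧ b ∈ R ∧ hammingDist a b = 1

/-- `a` and `b` are connected in the solution graph of `R`. -/
def connIn {ι : Type*} [Fintype ι] [DecidableEq ι] (R : Set (ι → Bool)) :
    (ι → Bool) → (ι → Bool) → Prop :=
  Relation.ReflTransGen (stepR R)

/-- There is a path of length `k` from `a` to `b` in the solution graph of `R`. -/
def hasPathLen {ι : Type*} [Fintype ι] [DecidableEq ι] (R : Set (ι → Bool)) :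
    ℕ → (ι → Bool) → (ι → Bool) → Prop
  | 0, a, b => a = b
  | k + 1, a, b => ∃ c, stepR R a c ∧ hasPathLen R k c b

/-- Shortest-path distance in the solution graph of `R`. -/
noncomputable def distIn {ι : Type*} [Fintype ι] [DecidableEq ι] (R : Set (ι → Bool))
    (a b : ι → Bool) : ℕ :=
  sInf {k | hasPathLen R k a b}

/-- The relation on `{0,1}^n` defined by a constraint family `((V j, Q j))_j`. -/
def famSet {n : ℕ} {J : Type*} (V : J → Finset (Fin n))
    (Q : ∀ j, Set ({i // i ∈ V j} → Bool)) : Set (Fin n → Bool) :=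
  {a | ∀ j, (fun i : {i // i ∈ V j} => a i.1) ∈ Q j}

/-- The projection of the defined relation to the scope of the `j`-th
constraint. -/
def projSet {n : ℕ} {J : Type*} (V : J → Finset (Fin n))
    (Q : ∀ j, Set ({i // i ∈ V j} → Bool)) (j : J) :
    Set ({i // i ∈ V j} → Bool) :=
  {x | ∃ c ∈ famSet V Q, x = fun i : {i // i ∈ V j} => c i.1}

/-!
In an IHSB− relation `R`, the elements below a fixed `m ∈ R` are closed under joins. So if the
coordinate `i` of `m` cannot be lowered inside `R` although some element of `R` vanishes at `i`,
then on `R` the coordinate `i` is implied by another coordinate `k` at which `m` is `1`: otherwise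
the join of suitable meets `m ⊓ c` would be `m` with its `i`-th coordinate lowered.

Every component of the solution graph contains a locally minimal solution. Let `m` and `m'` be
distinct ones, say with `¬ m ≤ m'`. Each coordinate where `m` is `1` and `m'` is `0` is implied by
another such coordinate within the scope of a single constraint, and by finiteness following the
implications backwards leads to two coordinates of one scope that agree on all solutions. A step
changes only one coordinate, so neither of the two ever changes along a path, even after
projection to that scope.
-/

section SolutionGraph

variable {ι : Type*} [Fintype ι]

theorem eq_of_apply_ne_of_hammingDist_eq_one {β : ι → Type*} [∀ i, DecidableEq (β i)]
    {a b : ∀ i, β i} (h : hammingDist a b = 1) {p q : ι} (hp : a p ≠ b p) (hq : a q ≠ b q) :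
    p = q :=
  Finset.card_le_one.1 h.le p (by simpa using hp) q (by simpa using hq)

variable [DecidableEq ι]

theorem hammingDist_update_eq_one {β : ι → Type*} [∀ i, DecidableEq (β i)] {a : ∀ i, β i} {i : ι}
    {x : β i} (h : a i ≠ x) : hammingDist a (Function.update a i x) = 1 := by
  refine Finset.card_eq_one.2 ⟨i, Finset.ext fun k => ?_⟩
  rcases eq_or_ne k i with rfl | hk
  · simpa using h
  · simp [hk]

variable {R : Set (ι → Bool)} {a b : ι → Bool}

theorem connIn.symm (h : connIn R a b) : connIn R b a := by
  have : Std.Symm (stepR R) := ⟨fun c d h => ⟨h.2.1, h.1, hammingDist_comm c d ▸ h.2.2⟩⟩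
  exact Std.Symm.symm (r := Relation.ReflTransGen (stepR R)) a b h

theorem connIn.mem (h : connIn R a b) (ha : a ∈ R) : b ∈ R := by
  induction h with
  | refl => exact ha
  | tail _ hstep _ => exact hstep.2.1

theorem connIn.apply_eq (h : connIn R a b) {p q : ι} (hpq : p ≠ q) (hR : ∀ c ∈ R, c p = c q) :
    a p = b p := by
  induction h with
  | refl => rfl
  | @tail c d _ hstep ih =>
    obtain ⟨hc, hd, hdist⟩ := hstep
    refine ih.trans (by_contra fun hp : c p ≠ d p => hpq ?_)
    have hq : c q ≠ d q := by rwa [← hR c hc, ← hR d hd]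
    exact eq_of_apply_ne_of_hammingDist_eq_one hdist hp hq

/-- A locally minimal element of a Boolean relation: no single coordinate can be lowered from `1`
to `0` without leaving the relation. -/
def IsLocallyMinimal (R : Set (ι → Bool)) (m : ι → Bool) : Prop :=
  m ∈ R ∧ ∀ i, m i = true → Function.update m i false ∉ R

theorem exists_connIn_isLocallyMinimal (ha : a ∈ R) : ∃ m, connIn R a m ∧ IsLocallyMinimal R m := by
  obtain ⟨m, ham, hmin⟩ := (Set.toFinite {c | connIn R a c}).exists_minimal
    ⟨a, Relation.ReflTransGen.refl⟩
  refine ⟨m, ham, ham.mem ha, fun i hi hupd => ?_⟩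
  have hstep : stepR R m (Function.update m i false) :=
    ⟨ham.mem ha, hupd, hammingDist_update_eq_one (by simp [hi])⟩
  have hlt : Function.update m i false < m := update_lt_self_iff.2 (hi ▸ Bool.false_lt_true)
  exact hlt.not_ge (hmin (Relation.ReflTransGen.tail ham hstep) hlt.le)

end SolutionGraph

section IHSB

/-- A subset of a lattice is IHSB− if it is closed under `(x, y, z) ↦ x ⊓ (y ⊔ z)`; on `ι → Bool`
this is the coordinatewise operation `x ∧ (y ∨ z)`. -/
def IsIHSBMinus {α : Type*} [Lattice α] (R : Set α) : Prop :=
  ∀ x ∈ R, ∀ y ∈ R, ∀ z ∈ R, x ⊓ (y ⊔ z) ∈ R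

theorem IsIHSBMinus.infClosed {α : Type*} [Lattice α] {R : Set α} (hR : IsIHSBMinus R) :
    InfClosed R := fun x hx y hy => by
  simpa using hR x hx y hy y hy

theorem IsIHSBMinus.supClosed_inter_Iic {α : Type*} [Lattice α] {R : Set α} (hR : IsIHSBMinus R)
    {m : α} (hm : m ∈ R) : SupClosed (R ∩ Set.Iic m) := by
  rintro x ⟨hx, hxm⟩ y ⟨hy, hym⟩
  have hsup : x ⊔ y ≤ m := sup_le hxm hym
  exact ⟨inf_eq_right.2 hsup ▸ hR m hm x hx y hy, hsup⟩

theorem IsIHSBMinus.exists_forall_apply_le {ι : Type*} [Finite ι] [DecidableEq ι]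
    {R : Set (ι → Bool)} (hR : IsIHSBMinus R) {m b : ι → Bool} (hm : m ∈ R) (hb : b ∈ R) {i : ι}
    (hbi : b i = false) (hupd : Function.update m i false ∉ R) :
    ∃ k ≠ i, m k = true ∧ ∀ c ∈ R, c k ≤ c i := by
  cases nonempty_fintype ι
  by_contra! hcon
  have hwitness : ∀ k, ∃ c ∈ R, c i = false ∧ (k ≠ i → m k ≤ c k) := by
    intro k
    by_cases hk : k ≠ i ∧ m k = true
    · obtain ⟨c, hc, hlt⟩ := hcon k hk.1 hk.2
      obtain ⟨hci, hck⟩ := Bool.lt_iff.1 hlt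
      exact ⟨c, hc, hci, fun _ => hck ▸ Bool.le_true _⟩
    · exact ⟨b, hb, hbi, fun hki => by simp_all⟩
  choose c hc hci hck using hwitness
  have huniv : (Finset.univ : Finset ι).Nonempty := ⟨i, Finset.mem_univ i⟩
  have hmem : Finset.univ.sup' huniv (fun k => m ⊓ c k) ∈ R :=
    ((hR.supClosed_inter_Iic hm).finsetSup'_mem huniv
      fun k _ => ⟨hR.infClosed hm (hc k), Set.mem_Iic.2 inf_le_left⟩).1
  have hsup : Finset.univ.sup' huniv (fun k => m ⊓ c k) = Function.update m i false := by
    apply le_antisymm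
    · exact Finset.sup'_le _ _ fun k _ =>
        le_update_iff.2 ⟨by simp [hci k], fun l _ => inf_le_left⟩
    · refine update_le_iff.2 ⟨Bool.false_le _, fun k hk => ?_⟩
      calc m k ≤ (m ⊓ c k) k := le_inf le_rfl (hck k hk)
        _ ≤ _ := Finset.le_sup' (fun k => m ⊓ c k) (Finset.mem_univ k) k
  exact hupd (hsup ▸ hmem)

end IHSB

section ConstraintFamily

theorem exists_ne_forall_apply_eq {ι : Type*} [Finite ι] {F : Set (ι → Bool)} {m b : ι → Bool}
    (hb : b ∈ F) (hmb : ¬ m ≤ b) {r : ι → ι → Prop}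
    (himp : ∀ i, b i < m i → ∃ k ≠ i, r i k ∧ m k = true ∧ ∀ c ∈ F, c k ≤ c i) :
    ∃ p q, p ≠ q ∧ r p q ∧ b p < m p ∧ ∀ c ∈ F, c p = c q := by
  obtain ⟨i₀, hi₀⟩ : ∃ i, b i < m i := by simpa [Pi.le_def] using hmb
  obtain ⟨i, hi, hmin⟩ := (Set.toFinite {i | b i < m i}).exists_minimalFor
    (fun i (c : F) => c.1 i) _ ⟨i₀, hi₀⟩
  obtain ⟨k, hki, hr, hmk, hle⟩ := himp i hi
  have hk : b k < m k := Bool.lt_iff.2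
    ⟨Bool.eq_false_of_le_false ((hle b hb).trans_eq (Bool.lt_iff.1 hi).1), hmk⟩
  exact ⟨i, k, hki.symm, hr, hi, fun c hc =>
    (hmin hk (fun c => hle c c.2) ⟨c, hc⟩).antisymm (hle c hc)⟩

variable {ι : Type*} [DecidableEq ι]

theorem restrict_update_of_notMem {β : ι → Type*} {s : Finset ι} {i : ι} (hi : i ∉ s)
    (a : ∀ k, β k) (x : β i) : s.restrict (Function.update a i x) = s.restrict a :=
  Function.update_comp_eq_of_forall_ne' a x fun k h => hi (h ▸ k.2)

theorem restrict_update_of_mem {β : ι → Type*} {s : Finset ι} {i : ι} (hi : i ∈ s)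
    (a : ∀ k, β k) (x : β i) :
    s.restrict (Function.update a i x) = Function.update (s.restrict a) ⟨i, hi⟩ x :=
  Function.update_comp_eq_of_injective' a Subtype.val_injective ⟨i, hi⟩ x

variable {J : Type*} {V : J → Finset ι} {Q : ∀ j, Set (V j → Bool)} {F : Set (ι → Bool)}

theorem IsLocallyMinimal.exists_scope_forall_apply_le (hQ : ∀ j, IsIHSBMinus (Q j))
    (hF : ∀ a, a ∈ F ↔ ∀ j, (V j).restrict a ∈ Q j) {m b : ι → Bool} (hm : IsLocallyMinimal F m)
    (hb : b ∈ F) {i : ι} (hi : b i < m i) :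
    ∃ k ≠ i, (∃ j, i ∈ V j ∧ k ∈ V j) ∧ m k = true ∧ ∀ c ∈ F, c k ≤ c i := by
  obtain ⟨hbi, hmi⟩ := Bool.lt_iff.1 hi
  obtain ⟨j, hj⟩ : ∃ j, (V j).restrict (Function.update m i false) ∉ Q j := by
    simpa [hF] using hm.2 i hmi
  have hmQ : (V j).restrict m ∈ Q j := (hF m).1 hm.1 j
  have hij : i ∈ V j := by
    by_contra hij
    exact hj ((restrict_update_of_notMem hij m false).symm ▸ hmQ)
  rw [restrict_update_of_mem hij] at hj
  obtain ⟨⟨k, hkj⟩, hki, hmk, hle⟩ :=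
    (hQ j).exists_forall_apply_le hmQ ((hF b).1 hb j) (i := ⟨i, hij⟩) hbi hj
  exact ⟨k, fun h => hki (Subtype.ext h), ⟨j, hij, hkj⟩, hmk, fun c hc => hle _ ((hF c).1 hc j)⟩

theorem IsLocallyMinimal.exists_scope_forall_apply_eq [Finite ι] (hQ : ∀ j, IsIHSBMinus (Q j))
    (hF : ∀ a, a ∈ F ↔ ∀ j, (V j).restrict a ∈ Q j) {m m' : ι → Bool} (hm : IsLocallyMinimal F m)
    (hm' : IsLocallyMinimal F m') (hne : m ≠ m') :
    ∃ j, ∃ p ∈ V j, ∃ q ∈ V j, p ≠ q ∧ m p ≠ m' p ∧ ∀ c ∈ F, c p = c q := by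
  wlog hle : ¬ m ≤ m' generalizing m m'
  · obtain ⟨j, p, hp, q, hq, hpq, hne', heq⟩ :=
      this hm' hm hne.symm fun hle' => hne (le_antisymm (not_not.1 hle) hle')
    exact ⟨j, p, hp, q, hq, hpq, hne'.symm, heq⟩
  obtain ⟨p, q, hpq, ⟨j, hp, hq⟩, hlt, heq⟩ := exists_ne_forall_apply_eq hm'.1 hle
    fun _ => hm.exists_scope_forall_apply_le hQ hF hm'.1
  exact ⟨j, p, hp, q, hq, hpq, hlt.ne', heq⟩

theorem stmt18_general [Fintype ι] (hQ : ∀ j, IsIHSBMinus (Q j))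
    (hF : ∀ a, a ∈ F ↔ ∀ j, (V j).restrict a ∈ Q j) {a b : ι → Bool} (ha : a ∈ F) (hb : b ∈ F)
    (hdisc : ¬ connIn F a b) :
    ∃ j, ∀ a' b', connIn F a a' → connIn F b b' →
      ¬ connIn ((V j).restrict '' F) ((V j).restrict a') ((V j).restrict b') := by
  obtain ⟨m, ham, hm⟩ := exists_connIn_isLocallyMinimal ha
  obtain ⟨m', hbm', hm'⟩ := exists_connIn_isLocallyMinimal hb
  have hne : m ≠ m' := by
    rintro rfl
    exact hdisc (Relation.ReflTransGen.trans ham hbm'.symm)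
  obtain ⟨j, p, hp, q, hq, hpq, hmp, heq⟩ := hm.exists_scope_forall_apply_eq hQ hF hm' hne
  refine ⟨j, fun a' b' haa' hbb' hconn => hmp ?_⟩
  have hproj : a' p = b' p := by
    refine hconn.apply_eq (p := ⟨p, hp⟩) (q := ⟨q, hq⟩) (fun h => hpq (congrArg Subtype.val h)) ?_
    rintro _ ⟨c, hc, rfl⟩
    exact heq c hc
  calc m p = a p := (ham.apply_eq hpq heq).symm
    _ = a' p := haa'.apply_eq hpq heq
    _ = b' p := hproj
    _ = b p := (hbb'.apply_eq hpq heq).symm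
    _ = m' p := hbm'.apply_eq hpq heq

end ConstraintFamily

theorem projSet_eq_image {n : ℕ} {J : Type*} (V : J → Finset (Fin n))
    (Q : ∀ j, Set ({i // i ∈ V j} → Bool)) (j : J) :
    projSet V Q j = (V j).restrict '' famSet V Q :=
  Set.ext fun _ => exists_congr fun _ => and_congr_right fun _ => eq_comm

/-- If every constraint relation is IHSB− (closed under the coordinatewise
operation `(x, y, z) ↦ x ∧ (y ∨ z)`), then for any two distinct connected components `A`, `B` of the
solution graph of the defined relation (given by representatives `a`, `b`),
there is a constraint whose projection disconnects them: no restriction of an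
element of `A` is connected to a restriction of an element of `B` in the
solution graph of the projection. -/
theorem stmt18 {n : ℕ} {J : Type*} [Fintype J]
    (V : J → Finset (Fin n)) (Q : ∀ j, Set ({i // i ∈ V j} → Bool))
    (hQ : ∀ j, ∀ a ∈ Q j, ∀ b ∈ Q j, ∀ c ∈ Q j,
      (fun i => a i && (b i || c i)) ∈ Q j)
    (a b : Fin n → Bool) (ha : a ∈ famSet V Q) (hb : b ∈ famSet V Q)
    (hdisc : ¬ connIn (famSet V Q) a b) :
    ∃ j, ∀ a' b', a' ∈ famSet V Q → connIn (famSet V Q) a a' →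
      b' ∈ famSet V Q → connIn (famSet V Q) b b' →
      ¬ connIn (projSet V Q j)
          (fun i : {i // i ∈ V j} => a' i.1)
          (fun i : {i // i ∈ V j} => b' i.1) := by
  obtain ⟨j, hj⟩ := stmt18_general hQ (F := famSet V Q) (fun _ => Iff.rfl) ha hb hdisc
  exact ⟨j, fun a' b' _ haa' _ hbb' => projSet_eq_image V Q j ▸ hj a' b' haa' hbb'⟩
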